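/- Let k be an infinite field. Let g ∈ k[x₁, x₂, x₃] have zero constant term and zero linear part (all homogeneous components of g of degree < 2 vanish), let g′ ∈ k[x₁, x₂, x₃] satisfy g′(0, 0, 0) ≠ 0, and set f = g + x₄·g′ ∈ k[x₁, x₂, x₃, x₄]. If (a₁, a₂, a₃, a₄) ∈ k⁴ is such that f(a₁ t, a₂ t, a₃ t, a₄ t) = 0 for all t ∈ k, then a₄ = 0, and consequently g(a₁ t, a₂ t, a₃ t) = 0 for all t ∈ k, i.e., the line { t·(a₁, a₂, a₃) : t ∈ k } lies in the surface Z(g). -/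

import Mathlib

/-- Over an infinite field, if `g` has zero constant term and zero linear part,
`g′(0,0,0) ≠ 0`, and the line `{t • a}` lies in `Z(g + x₄·g′)`, then `a₄ = 0` and the line
`{t • (a₁,a₂,a₃)}` lies in `Z(g)`. -/
theorem line_through_origin_lies_in_hyperplane
    (k : Type*) [Field k] [Infinite k]
    (g g' : MvPolynomial (Fin 3) k)
    (hg0 : MvPolynomial.homogeneousComponent 0 g = 0)
    (hg1 : MvPolynomial.homogeneousComponent 1 g = 0)
    (hg' : MvPolynomial.eval (0 : Fin 3 → k) g' ≠ 0)
    (f : MvPolynomial (Fin 4) k)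
    (hf : f = MvPolynomial.rename Fin.castSucc g +
        MvPolynomial.X (Fin.last 3) * MvPolynomial.rename Fin.castSucc g')
    (a : Fin 4 → k)
    (hline : ∀ t : k, MvPolynomial.eval (fun j => t * a j) f = 0) :
    a (Fin.last 3) = 0 ∧
    ∀ t : k, MvPolynomial.eval (fun j : Fin 3 => t * a (Fin.castSucc j)) g = 0 := by
  classical
  set b : Fin 3 → k := fun j => a (Fin.castSucc j) with hb
  let v : Fin 3 → Polynomial k := fun j => Polynomial.X * Polynomial.C (b j)
  have hev : ∀ (p : MvPolynomial (Fin 3) k) (t : k),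
      (MvPolynomial.aeval v p).eval t = MvPolynomial.eval (fun j => t * b j) p := by
    intro p t
    induction p using MvPolynomial.induction_on with
    | C c => simp
    | add p q hp hq => simp [hp, hq]
    | mul_X p i hp =>
      rw [map_mul, map_mul, Polynomial.eval_mul, hp, MvPolynomial.aeval_X, MvPolynomial.eval_X]
      simp only [v, Polynomial.eval_mul, Polynomial.eval_X, Polynomial.eval_C]
  have hline' : ∀ t : k, MvPolynomial.eval (fun j => t * b j) g +
      t * a (Fin.last 3) * MvPolynomial.eval (fun j => t * b j) g' = 0 := by
    intro t
    have h := hline t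
    rw [hf] at h
    simp only [map_add, map_mul, MvPolynomial.eval_rename, MvPolynomial.eval_X] at h
    exact h
  have hpoly : MvPolynomial.aeval v g + Polynomial.X * (Polynomial.C (a (Fin.last 3)) *
      MvPolynomial.aeval v g') = 0 := by
    apply Polynomial.funext
    intro t
    have h := hline' t
    simp only [Polynomial.eval_add, Polynomial.eval_mul, Polynomial.eval_X, Polynomial.eval_C,
      Polynomial.eval_zero, hev]
    rw [← h]; ring
  have hdvd : (Polynomial.X : Polynomial k) ^ 2 ∣ MvPolynomial.aeval v g := by
    rw [MvPolynomial.aeval_def, MvPolynomial.eval₂_eq']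
    apply Finset.dvd_sum
    intro m hm
    apply Dvd.dvd.mul_left
    have hd : 2 ≤ m.degree := by
      by_contra hlt
      have hc : MvPolynomial.coeff m g ≠ 0 := MvPolynomial.mem_support_iff.mp hm
      have h01 : m.degree = 0 ∨ m.degree = 1 := by omega
      rcases h01 with h | h
      · have := congrArg (MvPolynomial.coeff m) hg0
        rw [MvPolynomial.coeff_homogeneousComponent, if_pos h] at this
        exact hc (by simpa using this)
      · have := congrArg (MvPolynomial.coeff m) hg1
        rw [MvPolynomial.coeff_homogeneousComponent, if_pos h] at this
        exact hc (by simpa using this)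
    simp only [v, mul_pow, Finset.prod_mul_distrib]
    apply Dvd.dvd.mul_right
    rw [Finset.prod_pow_eq_pow_sum, ← Finsupp.degree_eq_sum]
    exact pow_dvd_pow _ hd
  have ha : a (Fin.last 3) = 0 := by
    have h1 := congrArg (fun p => Polynomial.coeff p 1) hpoly
    have h2 := (Polynomial.X_pow_dvd_iff.mp hdvd) 1 (by norm_num)
    have h3 := hev g' 0
    simp only [Polynomial.coeff_add, h2, Polynomial.coeff_X_mul, Polynomial.eval_mul, Polynomial.eval_C,
      Polynomial.coeff_zero_eq_eval_zero, h3, zero_mul, zero_add, Polynomial.coeff_zero] at h1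
    exact (mul_eq_zero.mp h1).resolve_right hg'
  refine ⟨ha, fun t => ?_⟩
  have h := hline' t
  rw [ha] at h
  simpa using h
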